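/- Let F be a field of characteristic 2, let p = x^d + p₁x^{d-1} + … + p_d ∈ F[x] be a monic irreducible polynomial of degree d that is inseparable (i.e., its formal derivative is zero, equivalently p_k = 0 for all odd k), let L = F[x]/(p), and let t_p : L → F be the F-linear map with t_p(x^j) = 0 for 0 ≤ j ≤ d-2 and t_p(x^{d-1}) = 1. Then for every b ∈ F and every integer k with 1 ≤ k ≤ d-1, the Scharlau transfer t_p∘[x, bx^{k-1}] (a quadratic form of dimension 2d over F) is Witt equivalent to the orthogonal sum, over those indices i ∈ {1,…,k} with p_i ≠ 0, of the 2-fold quadratic Pfister forms ⟨⟨p_i; b p_i γ_{k-i}]], where γ_n ∈ F is the coefficient of x^{d-1} in the remainder of x^{d+n-1} upon division by p for n ≥ 0, and γ_n := 0 for n < 0. (In the Witt group this is the identity t_p'([x, bx^{k-1}]) = Σ_{i=1}^{k} ⟨1,p_i⟩ ⊗ [1, b p_i γ_{k-i}], so in particular this transfer lies in I_q²(F).) -/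

import Mathlib

open QuadraticMap Polynomial

/-- The binary quadratic form `[a,b] : (u,v) ↦ a u² + u v + b v²` over `K`. -/
noncomputable def binQF (K : Type*) [CommRing K] (a b : K) : QuadraticForm K (K × K) :=
  a • QuadraticMap.linMulLin (LinearMap.fst K K K) (LinearMap.fst K K K)
    + QuadraticMap.linMulLin (LinearMap.fst K K K) (LinearMap.snd K K K)
    + b • QuadraticMap.linMulLin (LinearMap.snd K K K) (LinearMap.snd K K K)

/-- The hyperbolic plane `(u,v) ↦ u v` over `K`. -/
noncomputable def hypQF (K : Type*) [CommRing K] : QuadraticForm K (K × K) :=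
  QuadraticMap.linMulLin (LinearMap.fst K K K) (LinearMap.snd K K K)

/-- The orthogonal sum of `r` copies of the hyperbolic plane over `K`. -/
noncomputable def hypPow (K : Type*) [CommRing K] (r : ℕ) : QuadraticForm K (Fin r → K × K) :=
  QuadraticMap.pi fun _ => hypQF K

/-- Witt equivalence of quadratic forms over `K`: `Q₁ ⊥ H^{⊥r}` is isometric to
`Q₂ ⊥ H^{⊥s}` for some `r, s`. -/
def WittEquiv {K : Type*} [CommRing K] {V₁ V₂ : Type*} [AddCommGroup V₁] [Module K V₁]
    [AddCommGroup V₂] [Module K V₂]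
    (Q₁ : QuadraticForm K V₁) (Q₂ : QuadraticForm K V₂) : Prop :=
  ∃ r s : ℕ, (Q₁.prod (hypPow K r)).Equivalent (Q₂.prod (hypPow K s))

/-- The Scharlau transfer of a quadratic form `Q` over `L` along an `F`-linear functional
`t : L → F`: the quadratic form `t ∘ Q` over `F` on `V` viewed as an `F`-vector space. -/
noncomputable def scharlauTransfer {F L : Type*} [Field F] [CommRing L] [Algebra F L]
    (V : Type*) [AddCommGroup V] [Module L V] [Module F V] [IsScalarTower F L V]
    (t : L →ₗ[F] F) (Q : QuadraticForm L V) : QuadraticForm F V :=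
  t.compQuadraticMap' Q

/-- The 2-fold quadratic Pfister form `⟨⟨c; e]] = [1,e] ⊥ c·[1,e]` over `K`. -/
noncomputable def pfister2QF (K : Type*) [CommRing K] (c e : K) :
    QuadraticForm K ((K × K) × (K × K)) :=
  (binQF K 1 e).prod (c • binQF K 1 e)

/-!
Let `d = deg p`, let `s` be the functional reading off the coefficient of `x^{d-1}`, and let
`w_i = ∑_{m > i} p_{d-m} x^{m-i-1}`, with `p_0 = 1`, be the Horner tails of `p`. The bases `w_i`
and `x^i` of `L` are dual for the pairing `(y, z) ↦ s (y z)`, and in characteristic two squaring is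
additive, so `s ∘ [x, c]` is the orthogonal sum of the forms `[s (x w_i²), s (c x^{2i})]`, where
`s (x w_i²)` is the coefficient of `x^{2i}` in `p`. For `c = b x^{k-1}` all of them are hyperbolic
except `[1, b γ_k]` and the `[p_i, b γ_{k-i}]` with `1 ≤ i ≤ k` and `p_i ≠ 0`. Reducing
`x^{k-1} p = 0` gives `γ_k = ∑ p_i γ_{k-i}`, and `[1, ∑ e_i]` is Witt equivalent to the sum of the
`[1, e_i]`; pairing `[1, b p_i γ_{k-i}]` with `[p_i, b γ_{k-i}]` gives the Pfister forms.
-/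

section OrthogonalSums

variable {R M₁ M₂ M₃ N ι κ : Type*} [CommRing R] [AddCommGroup M₁] [AddCommGroup M₂]
  [AddCommGroup M₃] [AddCommGroup N] [Module R M₁] [Module R M₂] [Module R M₃] [Module R N]

theorem prod_comm_equivalent (Q₁ : QuadraticMap R M₁ N) (Q₂ : QuadraticMap R M₂ N) :
    (Q₁.prod Q₂).Equivalent (Q₂.prod Q₁) :=
  ⟨IsometryEquiv.prodComm Q₁ Q₂⟩

theorem prod_assoc_equivalent (Q₁ : QuadraticMap R M₁ N) (Q₂ : QuadraticMap R M₂ N)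
    (Q₃ : QuadraticMap R M₃ N) :
    ((Q₁.prod Q₂).prod Q₃).Equivalent (Q₁.prod (Q₂.prod Q₃)) :=
  ⟨⟨LinearEquiv.prodAssoc R M₁ M₂ M₃, fun _ => by simp [add_assoc]⟩⟩

theorem prod_right_comm_equivalent (Q₁ : QuadraticMap R M₁ N) (Q₂ : QuadraticMap R M₂ N)
    (Q₃ : QuadraticMap R M₃ N) :
    ((Q₁.prod Q₂).prod Q₃).Equivalent ((Q₁.prod Q₃).prod Q₂) :=
  (prod_assoc_equivalent Q₁ Q₂ Q₃).trans <|
    ((Equivalent.refl Q₁).prod (prod_comm_equivalent Q₂ Q₃)).trans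
      (prod_assoc_equivalent Q₁ Q₃ Q₂).symm

/-- The linear equivalence between families of pairs and pairs of families, along which orthogonal
sums of binary forms are compared. -/
def piProdLinearEquiv (R ι M₁ M₂ : Type*) [CommRing R] [AddCommGroup M₁] [AddCommGroup M₂]
    [Module R M₁] [Module R M₂] : (ι → M₁ × M₂) ≃ₗ[R] (ι → M₁) × (ι → M₂) where
  toEquiv := Equiv.arrowProdEquivProdArrow ι (fun _ => M₁) (fun _ => M₂)
  map_add' _ _ := rfl
  map_smul' _ _ := rfl

variable [Fintype ι] [Fintype κ]

theorem pi_comp_equiv_equivalent (Q : κ → QuadraticMap R M₁ N) (e : ι ≃ κ) :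
    (QuadraticMap.pi fun i => Q (e i)).Equivalent (QuadraticMap.pi Q) :=
  ⟨⟨LinearEquiv.funCongrLeft R M₁ e.symm, fun x => by simp [← e.sum_comp]⟩⟩

theorem pi_sum_equivalent (Q : ι ⊕ κ → QuadraticMap R M₁ N) :
    (QuadraticMap.pi Q).Equivalent
      ((QuadraticMap.pi fun i => Q (.inl i)).prod (QuadraticMap.pi fun j => Q (.inr j))) :=
  ⟨⟨LinearEquiv.sumArrowLequivProdArrow ι κ R M₁, fun x => by simp⟩⟩

theorem pi_option_equivalent (Q : Option ι → QuadraticMap R M₁ N) :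
    (QuadraticMap.pi Q).Equivalent ((Q none).prod (QuadraticMap.pi fun i => Q (some i))) :=
  ⟨⟨LinearEquiv.piOptionEquivProd R, fun x => by
    simp [Fintype.sum_option, LinearEquiv.piOptionEquivProd]⟩⟩

theorem pi_fin_succ_equivalent {n : ℕ} (Q : Fin (n + 1) → QuadraticMap R M₁ N) :
    (QuadraticMap.pi Q).Equivalent ((Q 0).prod (QuadraticMap.pi fun i : Fin n => Q i.succ)) :=
  ⟨⟨(Fin.consLinearEquiv R fun _ => M₁).symm, fun x => by simp [Fin.sum_univ_succ, Fin.tail]⟩⟩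

theorem pi_prod_equivalent (Q : ι → QuadraticMap R M₁ N) (Q' : ι → QuadraticMap R M₂ N) :
    (QuadraticMap.pi fun i => (Q i).prod (Q' i)).Equivalent
      ((QuadraticMap.pi Q).prod (QuadraticMap.pi Q')) :=
  ⟨⟨piProdLinearEquiv R ι M₁ M₂, fun x => by
    simp [piProdLinearEquiv, Equiv.arrowProdEquivProdArrow, Finset.sum_add_distrib]⟩⟩

end OrthogonalSums

section BinaryForms

variable {K : Type*} [CommRing K]

@[simp]
theorem binQF_apply (a b : K) (x : K × K) :
    binQF K a b x = a * x.1 ^ 2 + x.1 * x.2 + b * x.2 ^ 2 := by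
  simp [binQF, pow_two]

@[simp]
theorem hypQF_apply (x : K × K) : hypQF K x = x.1 * x.2 := by
  simp [hypQF]

theorem binQF_swap_equivalent (a b : K) : (binQF K a b).Equivalent (binQF K b a) :=
  ⟨⟨LinearEquiv.prodComm K K K, fun x => by
    simp only [AddHom.toFun_eq_coe, LinearMap.coe_toAddHom, LinearEquiv.coe_coe,
      LinearEquiv.prodComm_apply, Prod.fst_swap, Prod.snd_swap, binQF_apply]
    ring⟩⟩

theorem binQF_zero_right_equivalent (a : K) : (binQF K a 0).Equivalent (hypQF K) :=
  ⟨⟨(LinearEquiv.refl K K).skewProd (LinearEquiv.refl K K) (LinearMap.lsmul K K a), fun x => by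
    simp only [AddHom.toFun_eq_coe, LinearMap.coe_toAddHom, LinearEquiv.coe_coe,
      LinearEquiv.skewProd_apply, LinearEquiv.refl_apply, LinearMap.lsmul_apply, smul_eq_mul,
      hypQF_apply, binQF_apply]
    ring⟩⟩

theorem binQF_zero_left_equivalent (b : K) : (binQF K 0 b).Equivalent (hypQF K) :=
  (binQF_swap_equivalent 0 b).trans (binQF_zero_right_equivalent b)

theorem smul_binQF_one_equivalent {c : K} (hc : IsUnit c) (e : K) :
    (c • binQF K 1 (c * e)).Equivalent (binQF K c e) :=
  ⟨⟨(LinearEquiv.refl K K).prodCongr (LinearEquiv.smulOfUnit hc.unit), fun x => by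
    simp only [LinearEquiv.smulOfUnit, LinearEquiv.coe_prodCongr, LinearEquiv.refl_toLinearMap,
      AddHom.toFun_eq_coe, LinearMap.coe_toAddHom, LinearMap.prodMap_apply, LinearMap.id_coe,
      id_eq, LinearEquiv.coe_coe, DistribMulAction.toLinearEquiv_apply, Units.smul_def,
      IsUnit.unit_spec, smul_eq_mul, binQF_apply, smul_apply, one_mul]
    ring⟩⟩

theorem binQF_one_prod_binQF_one_equivalent [CharP K 2] (a b : K) :
    ((binQF K 1 a).prod (binQF K 1 b)).Equivalent ((binQF K 1 (a + b)).prod (hypQF K)) := by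
  refine ⟨⟨
    { toFun := fun x =>
        ((x.1.1 + x.2.1, x.1.2), (x.2.1 + b * (x.1.2 + x.2.2), x.1.2 + x.2.2))
      invFun := fun y =>
        ((y.1.1 + y.2.1 + b * y.2.2, y.1.2), (y.2.1 + b * y.2.2, y.1.2 + y.2.2))
      map_add' := fun x y => by
        ext <;> simp only [Prod.fst_add, Prod.snd_add, Prod.mk_add_mk] <;> ring
      map_smul' := fun c x => by
        ext <;> simp only [Prod.smul_fst, Prod.smul_snd, smul_eq_mul, RingHom.id_apply,
          Prod.smul_mk] <;> ring
      left_inv := fun x => by ext <;> grind [CharTwo.two_eq_zero (R := K)]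
      right_inv := fun x => by ext <;> grind [CharTwo.two_eq_zero (R := K)] },
    fun x => ?_⟩⟩
  simp only [QuadraticMap.prod_apply, binQF_apply, one_mul, hypQF_apply]
  grind [CharTwo.two_eq_zero (R := K)]

end BinaryForms

section Hyperbolic

variable {K V ι : Type*} [CommRing K] [AddCommGroup V] [Module K V] [Fintype ι]

theorem hypPow_add_equivalent (m n : ℕ) :
    (hypPow K (m + n)).Equivalent ((hypPow K m).prod (hypPow K n)) :=
  (pi_comp_equiv_equivalent (fun _ => hypQF K) finSumFinEquiv).symm.trans (pi_sum_equivalent _)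

theorem prod_hypPow_add_equivalent (Q : QuadraticForm K V) (m n : ℕ) :
    (Q.prod (hypPow K (m + n))).Equivalent ((Q.prod (hypPow K m)).prod (hypPow K n)) :=
  ((Equivalent.refl Q).prod (hypPow_add_equivalent m n)).trans (prod_assoc_equivalent Q _ _).symm

theorem pi_equivalent_hypPow {Q : ι → QuadraticForm K (K × K)}
    (hQ : ∀ i, (Q i).Equivalent (hypQF K)) :
    (QuadraticMap.pi Q).Equivalent (hypPow K (Fintype.card ι)) :=
  (Equivalent.pi hQ).trans (pi_comp_equiv_equivalent (fun _ => hypQF K) (Fintype.equivFin ι))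

theorem hypQF_equivalent_hypPow_one : (hypQF K).Equivalent (hypPow K 1) :=
  ⟨⟨(LinearEquiv.funUnique (Fin 1) K (K × K)).symm, fun x => by simp [hypPow]⟩⟩

end Hyperbolic

namespace WittEquiv

variable {K V₁ V₂ V₃ V₄ : Type*} [CommRing K] [AddCommGroup V₁] [AddCommGroup V₂]
  [AddCommGroup V₃] [AddCommGroup V₄] [Module K V₁] [Module K V₂] [Module K V₃] [Module K V₄]
  {Q₁ : QuadraticForm K V₁} {Q₂ : QuadraticForm K V₂} {Q₃ : QuadraticForm K V₃}
  {Q₄ : QuadraticForm K V₄}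

theorem of_equivalent (h : Q₁.Equivalent Q₂) : WittEquiv Q₁ Q₂ :=
  ⟨0, 0, h.prod (Equivalent.refl _)⟩

theorem refl (Q : QuadraticForm K V₁) : WittEquiv Q Q :=
  of_equivalent (Equivalent.refl Q)

theorem symm : WittEquiv Q₁ Q₂ → WittEquiv Q₂ Q₁ := fun ⟨r, s, h⟩ => ⟨s, r, h.symm⟩

theorem trans : WittEquiv Q₁ Q₂ → WittEquiv Q₂ Q₃ → WittEquiv Q₁ Q₃ :=
  fun ⟨r, s, h⟩ ⟨r', s', h'⟩ => ⟨r + r', s' + s,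
    (prod_hypPow_add_equivalent Q₁ r r').trans <|
    (h.prod (Equivalent.refl _)).trans <|
    (prod_right_comm_equivalent Q₂ _ _).trans <|
    (h'.prod (Equivalent.refl _)).trans (prod_hypPow_add_equivalent Q₃ s' s).symm⟩

instance : Trans (WittEquiv (K := K) (V₁ := V₁) (V₂ := V₂))
    (WittEquiv (K := K) (V₁ := V₂) (V₂ := V₃)) (WittEquiv (K := K) (V₁ := V₁) (V₂ := V₃)) :=
  ⟨trans⟩

theorem prod : WittEquiv Q₁ Q₂ → WittEquiv Q₃ Q₄ → WittEquiv (Q₁.prod Q₃) (Q₂.prod Q₄) :=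
  fun ⟨r, s, h⟩ ⟨r', s', h'⟩ => ⟨r + r', s + s',
    ((Equivalent.refl _).prod (hypPow_add_equivalent r r')).trans <|
    Equivalent.trans ⟨IsometryEquiv.prodProdProdComm _ _ _ _⟩ <|
    (h.prod h').trans <|
    Equivalent.trans ⟨IsometryEquiv.prodProdProdComm _ _ _ _⟩
      ((Equivalent.refl _).prod (hypPow_add_equivalent s s').symm)⟩

theorem hypPow_hypPow (m n : ℕ) : WittEquiv (hypPow K m) (hypPow K n) :=
  ⟨n, m, prod_comm_equivalent _ _⟩

theorem of_equivalent_hypPow {m n : ℕ} (h₁ : Q₁.Equivalent (hypPow K m))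
    (h₂ : Q₂.Equivalent (hypPow K n)) : WittEquiv Q₁ Q₂ :=
  (of_equivalent h₁).trans ((hypPow_hypPow m n).trans (of_equivalent h₂.symm))

theorem prod_hypPow (Q : QuadraticForm K V₁) (n : ℕ) : WittEquiv (Q.prod (hypPow K n)) Q :=
  ⟨0, n, (prod_hypPow_add_equivalent Q n 0).symm⟩

theorem prod_of_equivalent_hypPow {n : ℕ} (h : Q₂.Equivalent (hypPow K n)) :
    WittEquiv (Q₁.prod Q₂) Q₁ :=
  (of_equivalent ((Equivalent.refl Q₁).prod h)).trans (prod_hypPow Q₁ n)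

theorem pi_of_injective {ι κ : Type*} [Fintype ι] [Fintype κ] {Q : κ → QuadraticForm K (K × K)}
    {e : ι → κ} (he : Function.Injective e)
    (hQ : ∀ j ∉ Set.range e, (Q j).Equivalent (hypQF K)) :
    WittEquiv (QuadraticMap.pi Q) (QuadraticMap.pi fun i => Q (e i)) := by
  classical
  let split : ι ⊕ ((Set.range e)ᶜ : Set κ) ≃ κ :=
    (Equiv.sumCongr (Equiv.ofInjective e he) (Equiv.refl _)).trans
      (Equiv.Set.sumCompl (Set.range e))
  have hsplit : (QuadraticMap.pi Q).Equivalent ((QuadraticMap.pi fun i => Q (e i)).prod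
      (QuadraticMap.pi fun j : ((Set.range e)ᶜ : Set κ) => Q j)) :=
    (pi_comp_equiv_equivalent Q split).symm.trans (pi_sum_equivalent _)
  exact (of_equivalent hsplit).trans
    (prod_of_equivalent_hypPow (pi_equivalent_hypPow fun j => hQ j j.2))

end WittEquiv

theorem pi_fin_binQF_one_wittEquiv {K : Type*} [CommRing K] [CharP K 2] {n : ℕ} (e : Fin n → K) :
    WittEquiv (QuadraticMap.pi fun i => binQF K 1 (e i)) (binQF K 1 (∑ i, e i)) := by
  induction n with
  | zero =>
    rw [Fin.sum_univ_zero]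
    exact WittEquiv.of_equivalent_hypPow (pi_equivalent_hypPow nofun)
      ((binQF_zero_right_equivalent 1).trans hypQF_equivalent_hypPow_one)
  | succ n ih =>
    rw [Fin.sum_univ_succ]
    calc
      WittEquiv _
          ((binQF K 1 (e 0)).prod (QuadraticMap.pi fun i : Fin n => binQF K 1 (e i.succ))) :=
        WittEquiv.of_equivalent (pi_fin_succ_equivalent _)
      WittEquiv _ ((binQF K 1 (e 0)).prod (binQF K 1 (∑ i : Fin n, e i.succ))) :=
        (WittEquiv.refl _).prod (ih _)
      WittEquiv _ ((binQF K 1 (e 0 + ∑ i : Fin n, e i.succ)).prod (hypQF K)) :=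
        WittEquiv.of_equivalent (binQF_one_prod_binQF_one_equivalent _ _)
      WittEquiv _ (binQF K 1 (e 0 + ∑ i : Fin n, e i.succ)) :=
        WittEquiv.prod_of_equivalent_hypPow hypQF_equivalent_hypPow_one

theorem pi_binQF_one_wittEquiv {K ι : Type*} [CommRing K] [CharP K 2] [Fintype ι] (e : ι → K) :
    WittEquiv (QuadraticMap.pi fun i => binQF K 1 (e i)) (binQF K 1 (∑ i, e i)) := by
  let f := (Fintype.equivFin ι).symm
  rw [← f.sum_comp]
  exact (WittEquiv.of_equivalent (pi_comp_equiv_equivalent _ f).symm).trans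
    (pi_fin_binQF_one_wittEquiv fun i => e (f i))

theorem pi_pfister2QF_wittEquiv {K ι : Type*} [CommRing K] [CharP K 2] [Fintype ι] {c : ι → K}
    (hc : ∀ i, IsUnit (c i)) (e : ι → K) :
    WittEquiv (QuadraticMap.pi fun i => pfister2QF K (c i) (c i * e i))
      ((binQF K 1 (∑ i, c i * e i)).prod (QuadraticMap.pi fun i => binQF K (c i) (e i))) := by
  have hpfister (i : ι) : (pfister2QF K (c i) (c i * e i)).Equivalent
      ((binQF K 1 (c i * e i)).prod (binQF K (c i) (e i))) :=
    (Equivalent.refl _).prod (smul_binQF_one_equivalent (hc i) (e i))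
  have hsplit := (Equivalent.pi hpfister).trans (pi_prod_equivalent _ _)
  exact (WittEquiv.of_equivalent hsplit).trans ((pi_binQF_one_wittEquiv _).prod (WittEquiv.refl _))

theorem exists_basis_coe_eq_of_dual {F M ι : Type*} [Field F] [AddCommGroup M] [Module F M]
    [Finite ι] [DecidableEq ι] (v : Module.Basis ι F M) (w : ι → M) (f : ι → Module.Dual F M)
    (hf : ∀ i j, f i (w j) = if i = j then 1 else 0) : ∃ u : Module.Basis ι F M, ⇑u = w := by
  have := Fintype.ofFinite ι
  have hli : LinearIndependent F w :=
    .of_pairwise_dual_eq_zero_one w f (fun i j hij => by simp [hf, hij]) fun i => by simp [hf]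
  rcases isEmpty_or_nonempty ι with _ | _
  · exact ⟨v, Subsingleton.elim _ _⟩
  · exact ⟨basisOfLinearIndependentOfCardEqFinrank hli (Module.finrank_eq_card_basis v).symm,
      coe_basisOfLinearIndependentOfCardEqFinrank _ _⟩

theorem map_mul_sum_smul_sq {R A ι : Type*} [CommSemiring R] [CommSemiring A] [Algebra R A]
    [CharP A 2] [Fintype ι] (t : A →ₗ[R] R) (a : A) (u : ι → A) (r : ι → R) :
    t (a * (∑ i, r i • u i) ^ 2) = ∑ i, t (a * u i ^ 2) * r i ^ 2 := by
  simp only [CharTwo.sum_sq, _root_.smul_pow, Finset.mul_sum, mul_smul_comm, map_sum, map_smul,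
    smul_eq_mul, mul_comm]

theorem scharlauTransfer_binQF_equivalent {F L ι : Type*} [Field F] [CommRing L] [Algebra F L]
    [CharP L 2] [Fintype ι] [DecidableEq ι] (t : L →ₗ[F] F) (w v : Module.Basis ι F L)
    (hwv : ∀ i j, t (w i * v j) = if i = j then 1 else 0) (a c : L) :
    (scharlauTransfer (L × L) t (binQF L a c)).Equivalent
      (QuadraticMap.pi fun i => binQF F (t (a * w i ^ 2)) (t (c * v i ^ 2))) := by
  let coords : (ι → F × F) ≃ₗ[F] L × L :=
    (piProdLinearEquiv F ι F F).trans (w.equivFun.symm.prodCongr v.equivFun.symm)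
  refine Equivalent.symm ⟨⟨coords, fun x => ?_⟩⟩
  have hcoords : coords x = (∑ i, (x i).1 • w i, ∑ i, (x i).2 • v i) := by
    simp [coords, piProdLinearEquiv, Equiv.arrowProdEquivProdArrow,
      Module.Basis.equivFun_symm_apply]
  have hcross : t ((∑ i, (x i).1 • w i) * ∑ i, (x i).2 • v i) = ∑ i, (x i).1 * (x i).2 := by
    simp [Finset.sum_mul_sum, hwv, mul_comm]
  change t (binQF L a c (coords x)) = _
  simp only [hcoords, binQF_apply, map_add, map_mul_sum_smul_sq, hcross, pi_apply,
    Finset.sum_add_distrib]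

theorem even_of_coeff_ne_zero_of_derivative_eq_zero {R : Type*} [Semiring R] [CharP R 2]
    {p : R[X]} (hp : derivative p = 0) {n : ℕ} (hn : p.coeff n ≠ 0) : Even n := by
  rcases n with _ | n
  · exact Even.zero
  · by_contra hodd
    have hcast : (n : R) + 1 = 1 := by
      have h := (CharP.cast_eq_zero_iff R 2 n).2 (by grind)
      rw [h, zero_add]
    have hcoeff := congrArg (coeff · n) hp
    simp only [coeff_derivative, hcast, mul_one, coeff_zero] at hcoeff
    exact hn hcoeff

theorem coeff_iterate_divX {R : Type*} [Semiring R] (p : R[X]) (n m : ℕ) :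
    (divX^[n] p).coeff m = p.coeff (m + n) := by
  induction n generalizing m with
  | zero => rfl
  | succ n ih => rw [Function.iterate_succ_apply', coeff_divX, ih, add_right_comm, add_assoc]

theorem natDegree_iterate_divX {R : Type*} [Semiring R] (p : R[X]) (n : ℕ) :
    (divX^[n] p).natDegree = p.natDegree - n := by
  induction n with
  | zero => rfl
  | succ n ih =>
    rw [Function.iterate_succ_apply', natDegree_divX_eq_natDegree_tsub_one, ih, Nat.sub_sub]

section TopCoeff

variable {R : Type*} [CommRing R] {p : R[X]}

/-- The functional on `R[x]/(p)` reading off the coefficient of `x^{d-1}`, `d = deg p`, in the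
reduced representative; it is the functional `t_p` along which forms are transferred. -/
noncomputable def topCoeff (hp : p.Monic) : AdjoinRoot p →ₗ[R] R :=
  lcoeff R (p.natDegree - 1) ∘ₗ AdjoinRoot.modByMonicHom hp

/-- The class of `∑_{m ≥ n} p_m x^{m-n}` in `R[x]/(p)`, where `p_m` is the coefficient of `x^m`.
For `1 ≤ n ≤ d` these tails are dual to the powers of the root with respect to
`(y, z) ↦ topCoeff (y z)`; the index is shifted by one from that duality so that the `0`-th tail
is the class of `p`, which starts Horner's recursion at `0`. -/
noncomputable def hornerTail (p : R[X]) (n : ℕ) : AdjoinRoot p :=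
  AdjoinRoot.mk p (divX^[n] p)

theorem hornerTail_zero (p : R[X]) : hornerTail p 0 = 0 :=
  AdjoinRoot.mk_self

theorem root_mul_hornerTail_succ (p : R[X]) (n : ℕ) :
    AdjoinRoot.root p * hornerTail p (n + 1) = hornerTail p n - AdjoinRoot.of p (p.coeff n) := by
  have hdiv : X * divX^[n + 1] p + C (p.coeff n) = divX^[n] p := by
    have hcoeff : (divX^[n] p).coeff 0 = p.coeff n := by rw [coeff_iterate_divX, zero_add]
    rw [Function.iterate_succ_apply', ← hcoeff, X_mul_divX_add]
  rw [hornerTail, hornerTail, ← hdiv, map_add, map_mul, AdjoinRoot.mk_X, AdjoinRoot.mk_C,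
    add_sub_cancel_right]

theorem topCoeff_mk (hp : p.Monic) (f : R[X]) :
    topCoeff hp (AdjoinRoot.mk p f) = (f %ₘ p).coeff (p.natDegree - 1) := by
  rw [topCoeff, LinearMap.comp_apply, AdjoinRoot.modByMonicHom_mk, lcoeff_apply]

theorem topCoeff_mk_of_natDegree_lt (hp : p.Monic) {f : R[X]} (hf : f.natDegree < p.natDegree) :
    topCoeff hp (AdjoinRoot.mk p f) = f.coeff (p.natDegree - 1) := by
  nontriviality R
  rw [topCoeff_mk, (modByMonic_eq_self_iff hp).2 (degree_lt_degree hf)]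

theorem topCoeff_root_pow_eq_coeff_modByMonic (hp : p.Monic) (n : ℕ) :
    topCoeff hp (AdjoinRoot.root p ^ n) = (X ^ n %ₘ p).coeff (p.natDegree - 1) := by
  rw [← AdjoinRoot.mk_X, ← map_pow, topCoeff_mk]

theorem topCoeff_root_pow_of_lt (hp : p.Monic) {j : ℕ} (hj : j < p.natDegree) :
    topCoeff hp (AdjoinRoot.root p ^ j) = if j = p.natDegree - 1 then 1 else 0 := by
  rw [← AdjoinRoot.mk_X, ← map_pow,
    topCoeff_mk_of_natDegree_lt hp ((natDegree_X_pow_le j).trans_lt hj), coeff_X_pow]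
  simp only [eq_comm]

theorem eq_topCoeff (hp : p.Monic) {t : AdjoinRoot p →ₗ[R] R}
    (ht : ∀ j < p.natDegree, t (AdjoinRoot.root p ^ j) = if j = p.natDegree - 1 then 1 else 0) :
    t = topCoeff hp :=
  (AdjoinRoot.powerBasis' hp).basis.ext fun j => by
    rw [PowerBasis.basis_eq_pow]
    exact (ht j j.2).trans (topCoeff_root_pow_of_lt hp j.2).symm

theorem topCoeff_hornerTail (hp : p.Monic) (hd : 0 < p.natDegree) (n : ℕ) :
    topCoeff hp (hornerTail p n) = if n = 1 then 1 else 0 := by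
  rcases n with _ | n
  · simp [hornerTail_zero]
  · rw [hornerTail, topCoeff_mk_of_natDegree_lt hp (by rw [natDegree_iterate_divX]; omega),
      coeff_iterate_divX]
    split_ifs with hn
    · rw [show p.natDegree - 1 + (n + 1) = p.natDegree by omega, hp.coeff_natDegree]
    · exact coeff_eq_zero_of_natDegree_lt (by omega)

theorem topCoeff_root_pow_mul_hornerTail (hp : p.Monic) {j : ℕ} (hj : j < p.natDegree) (n : ℕ) :
    topCoeff hp (AdjoinRoot.root p ^ j * hornerTail p n) = if n = j + 1 then 1 else 0 := by
  induction j generalizing n with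
  | zero => rw [pow_zero, one_mul, topCoeff_hornerTail hp hj]
  | succ j ih =>
    rcases n with _ | n
    · simp [hornerTail_zero]
    · have hlow : topCoeff hp (AdjoinRoot.root p ^ j) = 0 := by
        rw [topCoeff_root_pow_of_lt hp (by omega), if_neg (by omega)]
      calc topCoeff hp (AdjoinRoot.root p ^ (j + 1) * hornerTail p (n + 1))
        _ = topCoeff hp (AdjoinRoot.root p ^ j * hornerTail p n
              - p.coeff n • AdjoinRoot.root p ^ j) := by
            rw [pow_succ, mul_assoc, root_mul_hornerTail_succ, mul_sub, Algebra.smul_def,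
              AdjoinRoot.algebraMap_eq, mul_comm (AdjoinRoot.of p _)]
        _ = if n + 1 = j + 1 + 1 then 1 else 0 := by
            rw [map_sub, map_smul, hlow, smul_zero, sub_zero, ih (by omega)]
            simp only [Nat.add_right_cancel_iff]

theorem mk_eq_sum_range_smul_root_pow {f : R[X]} {n : ℕ} (hf : f.natDegree < n) :
    AdjoinRoot.mk p f = ∑ j ∈ Finset.range n, f.coeff j • AdjoinRoot.root p ^ j := by
  conv_lhs => rw [f.as_sum_range_C_mul_X_pow' hf]
  simp [Algebra.smul_def]

theorem topCoeff_mk_mul_hornerTail_succ (hp : p.Monic) {f : R[X]}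
    (hf : f.natDegree < p.natDegree) (n : ℕ) :
    topCoeff hp (AdjoinRoot.mk p f * hornerTail p (n + 1)) = f.coeff n := by
  have hpair : ∀ j ∈ Finset.range p.natDegree,
      f.coeff j • topCoeff hp (AdjoinRoot.root p ^ j * hornerTail p (n + 1)) =
        if n = j then f.coeff j else 0 := fun j hj => by
    rw [topCoeff_root_pow_mul_hornerTail hp (Finset.mem_range.1 hj)]
    simp
  simp only [mk_eq_sum_range_smul_root_pow hf, Finset.sum_mul, smul_mul_assoc, map_sum, map_smul]
  rw [Finset.sum_congr rfl hpair, Finset.sum_ite_eq]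
  split_ifs with hn
  · rfl
  · exact (coeff_eq_zero_of_natDegree_lt (by grind)).symm

theorem topCoeff_root_mul_hornerTail_succ_sq [CharP R 2] (hp : p.Monic) (hd : 0 < p.natDegree)
    (n : ℕ) :
    topCoeff hp (AdjoinRoot.root p * hornerTail p (n + 1) ^ 2) = p.coeff (2 * n) := by
  have hrec : AdjoinRoot.root p * hornerTail p (n + 1) ^ 2 =
      hornerTail p n * hornerTail p (n + 1)
        - AdjoinRoot.mk p (C (p.coeff n)) * hornerTail p (n + 1) := by
    rw [pow_two, ← mul_assoc, root_mul_hornerTail_succ, sub_mul, AdjoinRoot.mk_C]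
  rw [hrec, map_sub, topCoeff_mk_mul_hornerTail_succ hp (by rwa [natDegree_C])]
  rcases n with _ | n
  · simp [hornerTail_zero, CharTwo.neg_eq]
  · rw [hornerTail, topCoeff_mk_mul_hornerTail_succ hp (by rw [natDegree_iterate_divX]; omega),
      coeff_iterate_divX, coeff_C_succ, sub_zero, two_mul]

theorem topCoeff_root_pow_add_natDegree (hp : p.Monic) {k : ℕ} (hk : 1 ≤ k)
    (hkd : k ≤ p.natDegree) :
    topCoeff hp (AdjoinRoot.root p ^ (k - 1 + p.natDegree)) =
      -∑ i : Fin k, p.coeff (p.natDegree - (i + 1)) *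
        topCoeff hp (AdjoinRoot.root p ^ (k - 1 + (p.natDegree - (i + 1)))) := by
  have hzero : topCoeff hp (AdjoinRoot.root p ^ (k - 1) * AdjoinRoot.mk p p) = 0 := by
    rw [AdjoinRoot.mk_self, mul_zero, map_zero]
  have hrec : topCoeff hp (AdjoinRoot.root p ^ (k - 1 + p.natDegree)) =
      -∑ n ∈ Finset.range p.natDegree,
        p.coeff n * topCoeff hp (AdjoinRoot.root p ^ (k - 1 + n)) := by
    rw [mk_eq_sum_range_smul_root_pow (Nat.lt_succ_self _), Finset.sum_range_succ,
      hp.coeff_natDegree, one_smul, mul_add, ← pow_add, map_add, add_comm] at hzero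
    simpa only [Finset.mul_sum, mul_smul_comm, ← pow_add, map_sum, map_smul, smul_eq_mul]
      using eq_neg_of_add_eq_zero_left hzero
  rw [hrec, ← Finset.sum_range_reflect, Fin.sum_univ_eq_sum_range fun i =>
    p.coeff (p.natDegree - (i + 1)) *
      topCoeff hp (AdjoinRoot.root p ^ (k - 1 + (p.natDegree - (i + 1)))),
    ← Finset.sum_subset (Finset.range_subset_range.2 hkd)]
  · simp only [Nat.sub_sub, add_comm 1]
  · intro i hi hik
    rw [Finset.mem_range] at hi hik
    rw [topCoeff_root_pow_of_lt hp (by omega), if_neg (by omega), mul_zero]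

open scoped Classical in
theorem sum_coeff_mul_topCoeff_root_pow [CharP R 2] (hp : p.Monic) (b : R) {k : ℕ}
    (hk1 : 1 ≤ k) (hkd : k ≤ p.natDegree) :
    ∑ i : {i : Fin k // p.coeff (p.natDegree - ((i : ℕ) + 1)) ≠ 0},
      p.coeff (p.natDegree - ((i : ℕ) + 1)) *
        (b * topCoeff hp (AdjoinRoot.root p ^ (k - 1 + (p.natDegree - ((i : ℕ) + 1))))) =
      b * topCoeff hp (AdjoinRoot.root p ^ (k - 1 + p.natDegree)) := by
  rw [← Finset.sum_subtype (Finset.univ.filter fun i : Fin k =>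
      p.coeff (p.natDegree - ((i : ℕ) + 1)) ≠ 0) (by simp) fun i : Fin k =>
      p.coeff (p.natDegree - ((i : ℕ) + 1)) *
        (b * topCoeff hp (AdjoinRoot.root p ^ (k - 1 + (p.natDegree - ((i : ℕ) + 1))))),
    Finset.sum_filter_of_ne fun i _ hi => left_ne_zero_of_mul hi,
    topCoeff_root_pow_add_natDegree hp hk1 hkd, CharTwo.neg_eq, Finset.mul_sum]
  simp only [mul_left_comm]

end TopCoeff

open scoped Classical in
theorem pi_binQF_coeff_wittEquiv {R : Type*} [CommRing R] {p : R[X]} (hp : p.Monic) {k m : ℕ}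
    (hk : k ≤ p.natDegree) (hm : p.natDegree < m) {g : ℕ → R}
    (hg : ∀ n, n + k < p.natDegree → g n = 0) :
    WittEquiv (QuadraticMap.pi fun n : Fin m => binQF R (p.coeff n) (g n))
      ((binQF R 1 (g p.natDegree)).prod
        (QuadraticMap.pi fun i : {i : Fin k // p.coeff (p.natDegree - ((i : ℕ) + 1)) ≠ 0} =>
          binQF R (p.coeff (p.natDegree - ((i : ℕ) + 1))) (g (p.natDegree - ((i : ℕ) + 1))))) := by
  let e : Option {i : Fin k // p.coeff (p.natDegree - ((i : ℕ) + 1)) ≠ 0} → Fin m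
    | none => ⟨p.natDegree, hm⟩
    | some i => ⟨p.natDegree - ((i : ℕ) + 1), by omega⟩
  have he : Function.Injective e := by
    rintro (_ | ⟨⟨i, hi⟩, _⟩) (_ | ⟨⟨j, hj⟩, _⟩) hij <;>
      simp only [e, Fin.mk.injEq, Option.some.injEq, Subtype.mk.injEq, reduceCtorEq] at hij ⊢ <;>
      omega
  have hhyp (n : Fin m) (hn : n ∉ Set.range e) :
      (binQF R (p.coeff n) (g n)).Equivalent (hypQF R) := by
    by_cases hcoeff : p.coeff n = 0
    · rw [hcoeff]
      exact binQF_zero_left_equivalent _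
    · have hle : (n : ℕ) ≤ p.natDegree := le_natDegree_of_ne_zero hcoeff
      have hne : (n : ℕ) ≠ p.natDegree := fun h => hn ⟨none, Fin.ext h.symm⟩
      have hlt : (n : ℕ) + k < p.natDegree := by
        by_contra hge
        have hn_eq : p.natDegree - (p.natDegree - 1 - n + 1) = n := by omega
        exact hn ⟨some ⟨⟨p.natDegree - 1 - n, by omega⟩, by rwa [hn_eq]⟩, Fin.ext hn_eq⟩
      rw [hg n hlt]
      exact binQF_zero_right_equivalent _
  have hoption := WittEquiv.of_equivalent
    (pi_option_equivalent fun o => binQF R (p.coeff (e o)) (g (e o)))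
  simp only [e, hp.coeff_natDegree] at hoption
  exact (WittEquiv.pi_of_injective he hhyp).trans hoption

section TransferTopCoeff

variable {F : Type*} [Field F] [CharP F 2] {p : F[X]}

theorem scharlauTransfer_topCoeff_equivalent (hp : p.Monic) (hd : 0 < p.natDegree)
    (c : AdjoinRoot p) :
    (scharlauTransfer _ (topCoeff hp) (binQF (AdjoinRoot p) (AdjoinRoot.root p) c)).Equivalent
      (QuadraticMap.pi fun i : Fin p.natDegree =>
        binQF F (p.coeff (2 * i)) (topCoeff hp (c * AdjoinRoot.root p ^ (2 * (i : ℕ))))) := by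
  have : Nontrivial (AdjoinRoot p) := AdjoinRoot.nontrivial p (degree_ne_of_natDegree_ne hd.ne')
  have : CharP (AdjoinRoot p) 2 := charP_of_injective_algebraMap' F 2
  let v : Module.Basis (Fin p.natDegree) F (AdjoinRoot p) := (AdjoinRoot.powerBasis' hp).basis
  have hv (i : Fin p.natDegree) : v i = AdjoinRoot.root p ^ (i : ℕ) :=
    (AdjoinRoot.powerBasis' hp).basis_eq_pow i
  have hdual (i j : Fin p.natDegree) :
      topCoeff hp (hornerTail p (i + 1) * v j) = if i = j then 1 else 0 := by
    rw [mul_comm, hv, topCoeff_root_pow_mul_hornerTail hp j.2]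
    simp only [Nat.add_right_cancel_iff, Fin.ext_iff]
  obtain ⟨w, hw⟩ := exists_basis_coe_eq_of_dual v (fun i => hornerTail p (i + 1))
    (fun j => topCoeff hp ∘ₗ LinearMap.mulRight F (v j)) fun j i => (hdual i j).trans (by
      simp only [eq_comm])
  have h := scharlauTransfer_binQF_equivalent (topCoeff hp) w v
    (fun i j => by rw [hw, hdual]) (AdjoinRoot.root p) c
  simpa only [hw, hv, topCoeff_root_mul_hornerTail_succ_sq hp hd, ← pow_mul, mul_comm _ 2] using h

theorem scharlauTransfer_topCoeff_wittEquiv (hp : p.Monic) (hd : 0 < p.natDegree)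
    (hp' : derivative p = 0) (c : AdjoinRoot p) :
    WittEquiv
      (scharlauTransfer _ (topCoeff hp) (binQF (AdjoinRoot p) (AdjoinRoot.root p) c))
      (QuadraticMap.pi fun n : Fin (2 * p.natDegree) =>
        binQF F (p.coeff n) (topCoeff hp (c * AdjoinRoot.root p ^ (n : ℕ)))) := by
  let double (i : Fin p.natDegree) : Fin (2 * p.natDegree) := ⟨2 * i, by omega⟩
  have hdouble : Function.Injective double := fun i j hij => by
    simp only [double, Fin.mk.injEq] at hij
    omega
  have hodd (n : Fin (2 * p.natDegree)) (hn : n ∉ Set.range double) : p.coeff n = 0 := by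
    by_contra hne
    obtain ⟨i, hi⟩ := (even_of_coeff_ne_zero_of_derivative_eq_zero hp' hne).two_dvd
    exact hn ⟨⟨i, by omega⟩, Fin.ext hi.symm⟩
  have hpi := WittEquiv.pi_of_injective (Q := fun n : Fin (2 * p.natDegree) =>
    binQF F (p.coeff n) (topCoeff hp (c * AdjoinRoot.root p ^ (n : ℕ)))) hdouble fun n hn => by
      rw [hodd n hn]
      exact binQF_zero_left_equivalent _
  exact (WittEquiv.of_equivalent (scharlauTransfer_topCoeff_equivalent hp hd c)).trans hpi.symm

open scoped Classical in
theorem scharlauTransfer_topCoeff_pow_wittEquiv (hp : p.Monic) (hp' : derivative p = 0) (b : F)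
    {k : ℕ} (hk1 : 1 ≤ k) (hkd : k ≤ p.natDegree) :
    WittEquiv
      (scharlauTransfer _ (topCoeff hp)
        (binQF (AdjoinRoot p) (AdjoinRoot.root p)
          (algebraMap F (AdjoinRoot p) b * AdjoinRoot.root p ^ (k - 1))))
      ((binQF F 1 (b * topCoeff hp (AdjoinRoot.root p ^ (k - 1 + p.natDegree)))).prod
        (QuadraticMap.pi fun i : {i : Fin k // p.coeff (p.natDegree - ((i : ℕ) + 1)) ≠ 0} =>
          binQF F (p.coeff (p.natDegree - ((i : ℕ) + 1)))
            (b * topCoeff hp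
              (AdjoinRoot.root p ^ (k - 1 + (p.natDegree - ((i : ℕ) + 1))))))) := by
  have hb (n : ℕ) : topCoeff hp
      (algebraMap F (AdjoinRoot p) b * AdjoinRoot.root p ^ (k - 1) * AdjoinRoot.root p ^ n) =
        b * topCoeff hp (AdjoinRoot.root p ^ (k - 1 + n)) := by
    rw [mul_assoc, ← pow_add, ← Algebra.smul_def, map_smul, smul_eq_mul]
  have htransfer := scharlauTransfer_topCoeff_wittEquiv hp (by omega) hp'
    (algebraMap F (AdjoinRoot p) b * AdjoinRoot.root p ^ (k - 1))
  simp only [hb] at htransfer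
  refine htransfer.trans (pi_binQF_coeff_wittEquiv hp hkd (by omega)
    (g := fun n => b * topCoeff hp (AdjoinRoot.root p ^ (k - 1 + n))) fun n hn => ?_)
  rw [topCoeff_root_pow_of_lt hp (by omega), if_neg (by omega), mul_zero]

end TransferTopCoeff

open scoped Classical in
theorem transfer_x_bx_pow_inseparable_general
    (F : Type*) [Field F] [CharP F 2] (p : Polynomial F)
    (hmonic : p.Monic) (hinsep : Polynomial.derivative p = 0)
    (d : ℕ) (hd : p.natDegree = d)
    (t : AdjoinRoot p →ₗ[F] F)
    (ht : ∀ j : ℕ, j < d → t (AdjoinRoot.root p ^ j) = if j = d - 1 then 1 else 0)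
    (γ : ℤ → F)
    (hγ : ∀ n : ℤ, γ n =
      if n < 0 then 0 else ((X : Polynomial F) ^ (d + n.toNat - 1) %ₘ p).coeff (d - 1))
    (b : F) (k : ℕ) (hk1 : 1 ≤ k) (hkd : k ≤ d) :
    WittEquiv
      (scharlauTransfer _ t
        (binQF (AdjoinRoot p) (AdjoinRoot.root p)
          (algebraMap F (AdjoinRoot p) b * AdjoinRoot.root p ^ (k - 1))))
      (QuadraticMap.pi fun i : {i : Fin k // p.coeff (d - ((i : ℕ) + 1)) ≠ 0} =>
        pfister2QF F (p.coeff (d - ((i : ℕ) + 1)))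
          (b * p.coeff (d - ((i : ℕ) + 1)) * γ ((k : ℤ) - ((i : ℕ) + 1)))) := by
  subst hd
  obtain rfl := eq_topCoeff hmonic ht
  have hγ_eq (i : Fin k) : γ ((k : ℤ) - ((i : ℕ) + 1)) =
      topCoeff hmonic (AdjoinRoot.root p ^ (k - 1 + (p.natDegree - ((i : ℕ) + 1)))) := by
    rw [hγ, if_neg (by omega), topCoeff_root_pow_eq_coeff_modByMonic]
    congr 3
    omega
  have hpfister := pi_pfister2QF_wittEquiv
    (c := fun i : {i : Fin k // p.coeff (p.natDegree - ((i : ℕ) + 1)) ≠ 0} =>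
      p.coeff (p.natDegree - ((i : ℕ) + 1)))
    (fun i => i.2.isUnit) fun i =>
      b * topCoeff hmonic (AdjoinRoot.root p ^ (k - 1 + (p.natDegree - ((i : ℕ) + 1))))
  rw [sum_coeff_mul_topCoeff_root_pow hmonic b hk1 hkd] at hpfister
  simp only [hγ_eq, mul_assoc, mul_left_comm b]
  exact (scharlauTransfer_topCoeff_pow_wittEquiv hmonic hinsep b hk1 hkd).trans hpfister.symm

open scoped Classical in
/-- For `p` monic irreducible and inseparable of degree `d` over a field `F` of
characteristic `2`, and `1 ≤ k ≤ d-1`, the Scharlau transfer of `[x, b·x^{k-1}]` is Witt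
equivalent to the orthogonal sum, over the indices `i ∈ {1,…,k}` with `p_i ≠ 0`, of the
2-fold quadratic Pfister forms `⟨⟨p_i; b·p_i·γ_{k-i}]]`. -/
theorem transfer_x_bx_pow_inseparable
    (F : Type*) [Field F] [CharP F 2] (p : Polynomial F)
    (hmonic : p.Monic) (hirr : Irreducible p) (hinsep : Polynomial.derivative p = 0)
    (d : ℕ) (hd : p.natDegree = d)
    (t : AdjoinRoot p →ₗ[F] F)
    (ht : ∀ j : ℕ, j < d → t (AdjoinRoot.root p ^ j) = if j = d - 1 then 1 else 0)
    (γ : ℤ → F)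
    (hγ : ∀ n : ℤ, γ n =
      if n < 0 then 0 else ((X : Polynomial F) ^ (d + n.toNat - 1) %ₘ p).coeff (d - 1))
    (b : F) (k : ℕ) (hk1 : 1 ≤ k) (hkd : k ≤ d - 1) :
    WittEquiv
      (scharlauTransfer _ t
        (binQF (AdjoinRoot p) (AdjoinRoot.root p)
          (algebraMap F (AdjoinRoot p) b * AdjoinRoot.root p ^ (k - 1))))
      (QuadraticMap.pi fun i : {i : Fin k // p.coeff (d - ((i : ℕ) + 1)) ≠ 0} =>
        pfister2QF F (p.coeff (d - ((i : ℕ) + 1)))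
          (b * p.coeff (d - ((i : ℕ) + 1)) * γ ((k : ℤ) - ((i : ℕ) + 1)))) := by
  exact transfer_x_bx_pow_inseparable_general F p hmonic hinsep d hd t ht γ hγ b k hk1
    (hkd.trans (Nat.sub_le d 1))
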